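/- Let b > 1 and n > 1 be integers and a a positive integer with gcd(r_b(n), a) = 1. Then S_a(b,n) satisfies Wilf's conjecture: F(S_a(b,n)) ≤ n·n(S_a(b,n)) − 1, where n is the embedding dimension of S_a(b,n) and n(S_a(b,n)) denotes the number of elements s of S_a(b,n) with s < F(S_a(b,n)). -/

import Mathlib

/-- The repunit number in base `b` of length `ℓ`: `r_b(ℓ) = ∑_{j=0}^{ℓ-1} b^j`. -/
def repunit (b ℓ : ℕ) : ℕ := ∑ j ∈ Finset.range ℓ, b ^ j

/-- The sequence `a_i = r_b(n) + a·r_b(i-1)`. -/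
def aseq (b a n i : ℕ) : ℕ := repunit b n + a * repunit b (i - 1)

/-- The additive submonoid `S_a(b,n)` of `ℕ` generated by `{a_i : i ≥ 1}`. -/
def grep (b a n : ℕ) : AddSubmonoid ℕ :=
  AddSubmonoid.closure {x | ∃ i, 1 ≤ i ∧ x = aseq b a n i}

/-!
Write `r = r_b(n)`. An element of `S = S_a(b,n)` is `k * r + a * R` with `R` a sum of `k` repunits,
and for `1 ≤ i < n` the number `f i = a * (r - i) + (b - 1) * i * r` has two properties.

* `f i ∉ S`: otherwise coprimality of `r` and `a` forces `r ∣ R + i` with `k ≤ (b - 1) * i`, and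
  since `(b - 1) * r_b(e) + 1 = b ^ e`, a positive multiple of `b ^ n - 1` would be a sum of
  `(b - 1) * i < (b - 1) * n` powers of `b`. This is impossible: cyclically rotating the exponents
  modulo `n` preserves divisibility by `b ^ n - 1`, so each of the `n` rotations is at least
  `b ^ n - 1 = (b - 1) * r`, whereas a single power of `b` contributes `r` to their sum.
* Every gap `x` is `f i - s` for some `i` and some `s ∈ S`: choose `R < r` with `a * R ≡ x` modulo
  `r`; the greedy expansion of `R` can be completed to a sum of `(b - 1) * i + 1` repunits with
  total `r - i`, for some `1 ≤ i < n`, and `s` comes from the added repunits.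

The `n - 1` numbers `f i` are thus at most `F`, and sending `(i, s)` to `f i - s` covers the gaps,
so there are at most `(n - 1) * n(S)` of them; adding the `n(S)` elements below `F` gives
`F + 1 ≤ n * n(S)`.
-/

open Finset

theorem add_one_le_of_gaps_eq_sub {ι : Type*} {S : Set ℕ} {F : ℕ} {I : Finset ι} {p : ι → ℕ}
    (hF : F ∉ S) (hp : ∀ i ∈ I, p i ≤ F)
    (hgap : ∀ x ∉ S, ∃ i ∈ I, ∃ s ∈ S, x + s = p i) :
    F + 1 ≤ (#I + 1) * Nat.card {s | s ∈ S ∧ s < F} := by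
  classical
  set A := {s ∈ range F | s ∈ S}
  have hcard : Nat.card {s | s ∈ S ∧ s < F} = #A := Nat.subtype_card A (by simp [A, and_comm])
  have hcover : range (F + 1) ⊆ A ∪ (I ×ˢ A).image fun t => p t.1 - t.2 := by
    intro x hx
    rw [mem_range] at hx
    by_cases hxS : x ∈ S
    · have : x ≠ F := fun h => hF (h ▸ hxS)
      exact mem_union_left _ (mem_filter.2 ⟨mem_range.2 (by omega), hxS⟩)
    · obtain ⟨i, hi, s, hs, hxs⟩ := hgap x hxS
      have hsF : s ≠ F := fun h => hF (h ▸ hs)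
      have hpi := hp i hi
      exact mem_union_right _ <| mem_image.2 ⟨(i, s),
        mem_product.2 ⟨hi, mem_filter.2 ⟨mem_range.2 (by omega), hs⟩⟩, by simp only; omega⟩
  calc F + 1 = #(range (F + 1)) := (card_range _).symm
    _ ≤ #A + #((I ×ˢ A).image fun t => p t.1 - t.2) :=
      (card_le_card hcover).trans (card_union_le _ _)
    _ ≤ #A + #I * #A := Nat.add_le_add_left (card_image_le.trans_eq (card_product I A)) _
    _ = (#I + 1) * Nat.card {s | s ∈ S ∧ s < F} := by rw [hcard]; ring

section Repunit

theorem repunit_succ (b n : ℕ) : repunit b (n + 1) = b * repunit b n + 1 :=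
  geom_sum_succ

theorem sub_one_mul_repunit_add_one {b : ℕ} (hb : 0 < b) (n : ℕ) :
    (b - 1) * repunit b n + 1 = b ^ n := by
  obtain ⟨c, rfl⟩ := Nat.exists_eq_add_of_lt hb
  simpa [repunit, mul_comm] using geom_sum_mul_add c n

theorem le_repunit {b : ℕ} (hb : 0 < b) (n : ℕ) : n ≤ repunit b n := by
  simpa [repunit] using (range n).card_nsmul_le_sum (b ^ ·) 1 fun j _ => Nat.one_le_pow j b hb

end Repunit

section PowerSums

variable {ι : Type*}

theorem sum_pow_add_mod (b n e : ℕ) : ∑ j ∈ range n, b ^ ((e + j) % n) = repunit b n := by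
  have h := congrArg (fun t => (t.map (b ^ ·)).sum) (Nat.multiset_Ico_map_mod e n)
  simp only [Multiset.map_map] at h
  calc ∑ j ∈ range n, b ^ ((e + j) % n)
      = ∑ x ∈ Ico e (e + n), b ^ (x % n) := by simp [sum_Ico_eq_sum_range]
    _ = repunit b n := h

theorem pow_mod_modEq_pow {b : ℕ} (hb : 0 < b) (n e : ℕ) :
    b ^ (e % n) ≡ b ^ e [MOD b ^ n - 1] := by
  have hone : b ^ n ≡ 1 [MOD b ^ n - 1] :=
    ((Nat.modEq_iff_dvd' (Nat.one_le_pow n b hb)).2 dvd_rfl).symm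
  calc b ^ (e % n) = 1 ^ (e / n) * b ^ (e % n) := by simp
    _ ≡ (b ^ n) ^ (e / n) * b ^ (e % n) [MOD b ^ n - 1] := (hone.symm.pow _).mul_right _
    _ = b ^ e := by rw [← pow_mul, ← pow_add, Nat.div_add_mod]

theorem pow_sub_one_dvd_sum_pow_add_mod {b n : ℕ} (hb : 0 < b) {s : Finset ι} {e : ι → ℕ}
    (h : b ^ n - 1 ∣ ∑ t ∈ s, b ^ e t) (j : ℕ) :
    b ^ n - 1 ∣ ∑ t ∈ s, b ^ ((e t + j) % n) := by
  have hmod : ∑ t ∈ s, b ^ ((e t + j) % n) ≡ (∑ t ∈ s, b ^ e t) * b ^ j [MOD b ^ n - 1] := by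
    simp only [sum_mul, ← pow_add]
    exact Nat.ModEq.sum fun t _ => pow_mod_modEq_pow hb n _
  exact (hmod.dvd_iff dvd_rfl).2 (h.mul_right _)

theorem mul_sub_one_le_card_of_pow_sub_one_dvd_sum_pow (b n : ℕ) {s : Finset ι} {e : ι → ℕ}
    (hs : s.Nonempty) (h : b ^ n - 1 ∣ ∑ t ∈ s, b ^ e t) : n * (b - 1) ≤ #s := by
  rcases b.eq_zero_or_pos with rfl | hb
  · simp
  rcases n.eq_zero_or_pos with rfl | hn
  · simp
  have hrotation (j : ℕ) : (b - 1) * repunit b n ≤ ∑ t ∈ s, b ^ ((e t + j) % n) := by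
    rw [Nat.eq_sub_of_add_eq (sub_one_mul_repunit_add_one hb n)]
    exact Nat.le_of_dvd (sum_pos (fun t _ => pow_pos hb _) hs)
      (pow_sub_one_dvd_sum_pow_add_mod hb h j)
  refine Nat.le_of_mul_le_mul_right ?_ (hn.trans_le (le_repunit hb n))
  calc n * (b - 1) * repunit b n = ∑ _j ∈ range n, (b - 1) * repunit b n := by simp [mul_assoc]
    _ ≤ ∑ j ∈ range n, ∑ t ∈ s, b ^ ((e t + j) % n) := sum_le_sum fun j _ => hrotation j
    _ = ∑ t ∈ s, ∑ j ∈ range n, b ^ ((e t + j) % n) := sum_comm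
    _ = #s * repunit b n := by simp [sum_pow_add_mod]

end PowerSums

/-- `R` is a sum of `k` repunits in base `b`. As `r_b(0) = 0` is a repunit, this is the same as
being a sum of at most `k` nonzero repunits. -/
def IsRepunitSum (b k R : ℕ) : Prop := ∃ e : Fin k → ℕ, ∑ j, repunit b (e j) = R

namespace IsRepunitSum

variable {b k k' n i R R' : ℕ}

theorem zero (b : ℕ) : IsRepunitSum b 0 0 := ⟨Fin.elim0, rfl⟩

theorem mul_repunit (b c l : ℕ) : IsRepunitSum b c (c * repunit b l) := ⟨fun _ => l, by simp⟩

theorem add (h : IsRepunitSum b k R) (h' : IsRepunitSum b k' R') :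
    IsRepunitSum b (k + k') (R + R') := by
  obtain ⟨e, rfl⟩ := h
  obtain ⟨e', rfl⟩ := h'
  exact ⟨Fin.append e e', by simp [Fin.sum_univ_add]⟩

theorem mono (h : IsRepunitSum b k R) (hk : k ≤ k') : IsRepunitSum b k' R := by
  simpa [repunit, Nat.add_sub_cancel' hk] using h.add (mul_repunit b (k' - k) 0)

theorem sub_one_mul_lt_of_repunit_dvd (hb : 1 < b) (h : IsRepunitSum b k R) (hi : i < n)
    (hne : R + i ≠ 0) (hdvd : repunit b n ∣ R + i) : (b - 1) * i < k := by
  by_contra! hk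
  obtain ⟨e, he⟩ := h.mono hk
  have hsum : ∑ j, b ^ e j = (b - 1) * (R + i) := by
    simp [← sub_one_mul_repunit_add_one (Nat.zero_lt_of_lt hb), sum_add_distrib, ← mul_sum, he,
      mul_add]
  have hnonempty : (univ : Finset (Fin ((b - 1) * i))).Nonempty :=
    nonempty_of_sum_ne_zero (hsum ▸ Nat.mul_ne_zero (Nat.sub_ne_zero_of_lt hb) hne)
  have hcard := mul_sub_one_le_card_of_pow_sub_one_dvd_sum_pow b n hnonempty <| by
    rw [hsum, ← sub_one_mul_repunit_add_one (Nat.zero_lt_of_lt hb), Nat.add_sub_cancel]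
    exact mul_dvd_mul_left _ hdvd
  rw [card_fin, mul_comm] at hcard
  exact hi.not_ge (Nat.le_of_mul_le_mul_left hcard (Nat.sub_pos_of_lt hb))

theorem exists_complement (hb : 0 < b) {n : ℕ} (hn : 2 ≤ n) {R : ℕ} (hR : R < repunit b n) :
    ∃ i ∈ Ico 1 n, ∃ k k' R', IsRepunitSum b k R ∧ IsRepunitSum b k' R' ∧
      k + k' = (b - 1) * i + 1 ∧ R + R' + i = repunit b n := by
  induction n, hn using Nat.le_induction generalizing R with
  | base =>
    have hR' : R ≤ b := by simpa [repunit, sum_range_succ, Nat.lt_succ_iff, add_comm] using hR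
    exact ⟨1, by simp, R, b - R, b - R, by simpa [repunit] using mul_repunit b R 1,
      by simpa [repunit] using mul_repunit b (b - R) 1, by omega,
      by simp [repunit, sum_range_succ]; omega⟩
  | succ n hn ih =>
    have hsucc := repunit_succ b n
    have hpos : 0 < repunit b n := by have := le_repunit hb n; omega
    obtain ⟨q, ρ, hρ, rfl⟩ : ∃ q ρ, ρ < repunit b n ∧ R = q * repunit b n + ρ :=
      ⟨_, _, Nat.mod_lt R hpos, (Nat.div_add_mod' R _).symm⟩
    -- The leading greedy digit `q` is at most `b`; it equals `b` only if nothing remains.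
    rcases lt_or_ge q b with hq | hq
    · obtain ⟨i, hi, k, k', R', hk, hk', hcard, hsum⟩ := ih hρ
      rw [mem_Ico] at hi
      obtain ⟨d, rfl⟩ := Nat.exists_eq_add_of_lt hq
      refine ⟨i + 1, mem_Ico.2 ⟨by omega, by omega⟩, q + k, d + k', d * repunit _ n + R',
        (mul_repunit _ q n).add hk, (mul_repunit _ d n).add hk', ?_, ?_⟩
      · simp only [Nat.add_sub_cancel] at hcard ⊢
        linarith
      · rw [hsucc]
        linarith
    · have hmul : b * repunit b n ≤ q * repunit b n := Nat.mul_le_mul_right _ hq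
      have hR' : q * repunit b n + ρ = b * repunit b n := by omega
      exact ⟨1, mem_Ico.2 ⟨le_rfl, by omega⟩, b, 0, 0, hR' ▸ mul_repunit b b n, zero b,
        by omega, by omega⟩

end IsRepunitSum

section Semigroup

variable {b a n : ℕ}

theorem mem_grep_iff {x : ℕ} :
    x ∈ grep b a n ↔ ∃ k R, IsRepunitSum b k R ∧ x = k * repunit b n + a * R := by
  constructor
  · intro h
    induction h using AddSubmonoid.closure_induction with
    | mem x hx =>
      obtain ⟨i, -, rfl⟩ := hx
      exact ⟨1, _, .mul_repunit b 1 (i - 1), by simp [aseq]⟩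
    | zero => exact ⟨0, 0, .zero b, by simp⟩
    | add x y _ _ hx hy =>
      obtain ⟨k, R, hR, rfl⟩ := hx
      obtain ⟨k', R', hR', rfl⟩ := hy
      exact ⟨k + k', R + R', hR.add hR', by ring⟩
  · rintro ⟨k, _, ⟨e, rfl⟩, rfl⟩
    have hsum : k * repunit b n + a * ∑ j, repunit b (e j) = ∑ j, aseq b a n (e j + 1) := by
      simp [aseq, sum_add_distrib, mul_sum]
    rw [hsum]
    exact sum_mem fun j _ => AddSubmonoid.subset_closure ⟨e j + 1, by simp, rfl⟩

/-- The pseudo-Frobenius numbers of `S_a(b,n)`, indexed by `1 ≤ i < n`. The subtraction is not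
truncated when `0 < b` and `i ≤ n`, because then `i ≤ r_b(n)`. -/
def pseudoFrobenius (b a n i : ℕ) : ℕ := a * (repunit b n - i) + (b - 1) * i * repunit b n

theorem pseudoFrobenius_notMem_grep (hb : 1 < b) (hcop : (repunit b n).Coprime a) {i : ℕ}
    (hi : i ∈ Ico 1 n) : pseudoFrobenius b a n i ∉ grep b a n := by
  intro hmem
  obtain ⟨k, R, hR, heq⟩ := mem_grep_iff.1 hmem
  rw [mem_Ico] at hi
  have hle := le_repunit (Nat.zero_lt_of_lt hb) n
  obtain ⟨r', hr'⟩ := Nat.exists_eq_add_of_le (hi.2.le.trans hle)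
  have hrel : k * repunit b n + a * (R + i) = (a + (b - 1) * i) * repunit b n := by
    rw [pseudoFrobenius, Nat.sub_eq_of_eq_add' hr'] at heq
    linear_combination -heq - a * hr'
  have hdvd : repunit b n ∣ R + i :=
    hcop.dvd_of_dvd_mul_left <|
      (Nat.dvd_add_right (Dvd.intro_left k rfl)).1 (hrel ▸ Dvd.intro_left _ rfl)
  have hk := hR.sub_one_mul_lt_of_repunit_dvd hb hi.2 (by omega) hdvd
  have hRi : a * repunit b n ≤ a * (R + i) :=
    Nat.mul_le_mul_left a (Nat.le_of_dvd (by omega) hdvd)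
  have hkr : (b - 1) * i * repunit b n < k * repunit b n :=
    Nat.mul_lt_mul_of_pos_right hk (by omega)
  linarith

theorem exists_add_eq_pseudoFrobenius (hb : 0 < b) (hn : 2 ≤ n)
    (hcop : (repunit b n).Coprime a) {x : ℕ} (hx : x ∉ grep b a n) :
    ∃ i ∈ Ico 1 n, ∃ s ∈ grep b a n, x + s = pseudoFrobenius b a n i := by
  have hle := le_repunit hb n
  obtain ⟨R, hR, hRx⟩ := Nat.exists_mul_mod_eq_of_coprime x hcop.symm (by omega)
  obtain ⟨i, hi, k, k', R', hk, hk', hcard, hsum⟩ := IsRepunitSum.exists_complement hb hn hR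
  have hmod : x ≡ k * repunit b n + a * R [MOD repunit b n] := by
    simpa [Nat.ModEq] using hRx.symm
  have hlt : x < k * repunit b n + a * R := by
    by_contra! hge
    obtain ⟨t, ht⟩ := (Nat.modEq_iff_dvd' hge).1 hmod.symm
    exact hx <| mem_grep_iff.2 ⟨k + t, R, hk.mono (Nat.le_add_right k t),
      by rw [Nat.eq_add_of_sub_eq hge ht]; ring⟩
  obtain ⟨t, ht⟩ := (Nat.modEq_iff_dvd' hlt.le).1 hmod
  obtain ⟨q, rfl⟩ : ∃ q, t = q + 1 :=
    Nat.exists_eq_add_one_of_ne_zero (by rintro rfl; omega)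
  refine ⟨i, hi, (k' + q) * repunit b n + a * R',
    mem_grep_iff.2 ⟨_, R', hk'.mono (Nat.le_add_right k' q), rfl⟩, ?_⟩
  have hxq := Nat.eq_add_of_sub_eq hlt.le ht
  have hcard_mul := congrArg (· * repunit b n) hcard
  rw [pseudoFrobenius, ← Nat.eq_sub_of_add_eq hsum]
  linarith

end Semigroup

/-- `S_a(b,n)` satisfies Wilf's conjecture: `F(S) ≤ e(S)·n(S) − 1`, where `F` is the
Frobenius number (the greatest integer not in `S`), the embedding dimension `e(S)`
equals `n`, and `n(S)` is the number of elements of `S` smaller than `F`. -/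
theorem stmt_18 (b a n : ℕ) (hb : 1 < b) (hn : 1 < n) (ha : 0 < a)
    (hgcd : Nat.gcd (repunit b n) a = 1) :
    ∀ F : ℤ, IsGreatest {x : ℤ | ∀ s ∈ grep b a n, (s : ℤ) ≠ x} F →
      F ≤ (n : ℤ) * Nat.card {s : ℕ | s ∈ grep b a n ∧ (s : ℤ) < F} - 1 := by
  rintro F ⟨hF_gap, hF_max⟩
  have gap_le {x : ℕ} (hx : x ∉ grep b a n) : (x : ℤ) ≤ F :=
    hF_max fun s hs hsx => hx (Int.ofNat_inj.1 hsx ▸ hs)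
  have pf_le (i : ℕ) (hi : i ∈ Ico 1 n) : (pseudoFrobenius b a n i : ℤ) ≤ F :=
    gap_le (pseudoFrobenius_notMem_grep hb hgcd hi)
  lift F to ℕ using (Int.natCast_nonneg _).trans (pf_le 1 (by simpa using hn))
  have hF : F ∉ grep b a n := fun h => hF_gap F h rfl
  have hwilf : F + 1 ≤ n * Nat.card {s | s ∈ grep b a n ∧ s < F} := by
    simpa [Nat.sub_add_cancel hn.le] using
      add_one_le_of_gaps_eq_sub (S := grep b a n) hF (fun i hi => Int.ofNat_le.1 (pf_le i hi))
        fun x hx => exists_add_eq_pseudoFrobenius (Nat.zero_lt_of_lt hb) hn hgcd hx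
  simp only [Nat.cast_lt]
  exact le_sub_iff_add_le.2 (mod_cast hwilf)
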